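/- Fix ρ > 0, λ ∈ ℝ, α ∈ ℝ and R > 0, and let (γ_n) be positive reals with γ_n/n^α → ρ as n → ∞. Set λ_n = n^(n(α−1))·e^(nλ), c_n = 2γ_n·κ_{n-1}/(n·κ_n), and E_n = λ_n·Γ(n+1)·κ_n·c_n^(−n). If √2·ρ·R/√π > 1, then (1/n)·ln( E_n·Γ_u(n, c_n·n^(3/2−α)·R) ) → λ + ln(√(2πe)·R) − √2·ρ·R/√π as n → ∞, while if √2·ρ·R/√π < 1 the same expression converges to λ + ln(π/(ρ√e)). Symmetrically, if √2·ρ·R/√π < 1, then (1/n)·ln( E_n·Γ_ℓ(n, c_n·n^(3/2−α)·R) ) → λ + ln(√(2πe)·R) − √2·ρ·R/√π, while if √2·ρ·R/√π > 1 it converges to λ + ln(π/(ρ√e)). -/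

import Mathlib

/-!
Put `s = √2 ρ R / √π`. After cancelling `Γ(n)`, the expectation is
`λ_n n κ_n c_n⁻ⁿ` times the integral of `t^(n-1) e^(-t)` over `t > x_n` or `0 < t ≤ x_n`, where
`x_n = c_n n^(3/2-α) R`.

*The prefactor.* Log-convexity of `Γ` pins `Γ(n/2+1) / Γ(n/2+1/2)` between `√(n/2)` and
`√((n+1)/2)`. Since `κ_{n-1} / κ_n` is this quotient over `√π`, it follows that `x_n / n → s`
(`tendsto_gammaRatio`, `kappa_quot`). Legendre's duplication formula, combined with the same
estimate, reduces the growth of `κ_n` to Stirling's formula for `n!` (`tendsto_log_kappa`).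

*The integrals.* By Laplace's principle, with `t = n u`, the exponential rate relative to `nⁿ` is
the supremum of `log u - u` over `u ≥ s` or `u ≤ s`, which is `log s - s` when the critical point
`u = 1` is excluded and `-1` when it is included (`tendsto_rate_incomplete`). Lower bounds come from
a window of length one next to the maximizer (`le_setIntegral_gamma`). Upper bounds are the full
integral `Γ(n)` if `u = 1` is admissible, and otherwise `xⁿ e⁻ˣ`, from the tangent-line bound
`t ≤ x exp(t/x - 1)` (`setIntegral_far_le`, `setIntegral_near_le`).

All powers of `n` cancel when the two rates are added.
-/

open Filter Real

/-- `κ n`, the volume of the unit ball in `ℝⁿ`. -/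
noncomputable def kappa (n : ℕ) : ℝ := Real.pi ^ ((n : ℝ) / 2) / Real.Gamma ((n : ℝ) / 2 + 1)

/-- The upper regularized incomplete gamma function `Γ_u(x, R)`. -/
noncomputable def gammaU (x R : ℝ) : ℝ :=
  (∫ t in Set.Ioi R, t ^ (x - 1) * Real.exp (-t)) / Real.Gamma x

/-- The lower regularized incomplete gamma function `Γ_ℓ(x, R)`. -/
noncomputable def gammaL (x R : ℝ) : ℝ :=
  (∫ t in Set.Ioc (0 : ℝ) R, t ^ (x - 1) * Real.exp (-t)) / Real.Gamma x

/-! ### Gamma function asymptotics and ball volumes -/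

/-- Log-convexity of `Γ` at the midpoint of `x` and `x + 1`. -/
lemma Gamma_add_half_le {x : ℝ} (hx : 0 < x) :
    Real.Gamma (x + 1 / 2) ≤ √x * Real.Gamma x := by
  have h := Real.Gamma_mul_add_mul_le_rpow_Gamma_mul_rpow_Gamma (s := x) (t := x + 1)
    (a := 1 / 2) (b := 1 / 2) hx (by linarith) (by norm_num) (by norm_num) (by norm_num)
  have hG := Real.Gamma_pos_of_pos hx
  rw [Real.Gamma_add_one hx.ne', ← Real.sqrt_eq_rpow, ← Real.sqrt_eq_rpow,
    Real.sqrt_mul hx.le, mul_left_comm, Real.mul_self_sqrt hG.le] at h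
  convert h using 2
  ring

/-- `Γ(n/2 + 1) / Γ(n/2 + 1/2)`, the quotient that governs `κ (n - 1) / κ n`. -/
noncomputable def gammaRatio (n : ℕ) : ℝ :=
  Real.Gamma ((n : ℝ) / 2 + 1) / Real.Gamma ((n : ℝ) / 2 + 1 / 2)

lemma gammaRatio_pos (n : ℕ) : 0 < gammaRatio n :=
  div_pos (Real.Gamma_pos_of_pos (by positivity)) (Real.Gamma_pos_of_pos (by positivity))

lemma gammaRatio_le (n : ℕ) : gammaRatio n ≤ √((n : ℝ) / 2 + 1 / 2) := by
  have h := Gamma_add_half_le (x := (n : ℝ) / 2 + 1 / 2) (by positivity)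
  rw [show (n : ℝ) / 2 + 1 / 2 + 1 / 2 = n / 2 + 1 by ring] at h
  rwa [gammaRatio, div_le_iff₀ (Real.Gamma_pos_of_pos (by positivity))]

lemma le_gammaRatio {n : ℕ} (hn : 0 < n) : √((n : ℝ) / 2) ≤ gammaRatio n := by
  have hn' : (0 : ℝ) < (n : ℝ) / 2 := by positivity
  have h := Gamma_add_half_le hn'
  rw [gammaRatio, le_div_iff₀ (Real.Gamma_pos_of_pos (by positivity)),
    Real.Gamma_add_one hn'.ne']
  calc _ ≤ √((n : ℝ) / 2) * (√((n : ℝ) / 2) * Real.Gamma ((n : ℝ) / 2)) := by gcongr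
    _ = _ := by rw [← mul_assoc, Real.mul_self_sqrt hn'.le]

lemma tendsto_gammaRatio :
    Tendsto (fun n : ℕ => gammaRatio n / √(n : ℝ)) atTop (nhds (√(1 / 2))) := by
  have h1 : Tendsto (fun n : ℕ => √(1 / 2 + 1 / 2 * (1 / (n : ℝ)))) atTop (nhds (√(1 / 2))) := by
    have := (tendsto_one_div_atTop_nhds_zero_nat (𝕜 := ℝ)).const_mul (1 / 2)
    have := (this.const_add (1 / 2)).sqrt
    simpa using this
  refine tendsto_of_tendsto_of_tendsto_of_le_of_le' tendsto_const_nhds h1 ?_ ?_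
  · filter_upwards [eventually_gt_atTop 0] with n hn
    have hn' : (0 : ℝ) < n := by exact_mod_cast hn
    rw [le_div_iff₀ (by positivity), ← Real.sqrt_mul (by positivity),
      show 1 / 2 * (n : ℝ) = n / 2 by ring]
    exact le_gammaRatio hn
  · filter_upwards [eventually_gt_atTop 0] with n hn
    have hn' : (0 : ℝ) < n := by exact_mod_cast hn
    rw [div_le_iff₀ (by positivity), ← Real.sqrt_mul (by positivity),
      show (1 / 2 + 1 / 2 * (1 / (n : ℝ))) * n = n / 2 + 1 / 2 by field_simp]
    exact gammaRatio_le n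

lemma tendsto_log_div : Tendsto (fun n : ℕ => Real.log n / n) atTop (nhds 0) :=
  (Real.isLittleO_log_id_atTop.tendsto_div_nhds_zero).comp tendsto_natCast_atTop_atTop

/-- The leading-order form of Stirling's formula. -/
lemma tendsto_log_factorial :
    Tendsto (fun n : ℕ => Real.log (n.factorial : ℝ) / n - Real.log n) atTop (nhds (-1)) := by
  have h0 := Stirling.tendsto_stirlingSeq_sqrt_pi.log (by positivity)
  have h1 := h0.mul (tendsto_one_div_atTop_nhds_zero_nat (𝕜 := ℝ))
  have h2 := (tendsto_one_div_atTop_nhds_zero_nat (𝕜 := ℝ)).const_mul (1 / 2 * Real.log 2)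
  have h3 := tendsto_log_div.const_mul (1 / 2)
  have h4 := ((h1.add h2).add h3).sub_const 1
  simp only [mul_zero, add_zero, zero_sub] at h4
  refine h4.congr' ?_
  filter_upwards [eventually_gt_atTop 0] with n hn
  have hn' : (0 : ℝ) < n := by exact_mod_cast hn
  rw [Stirling.log_stirlingSeq_formula, Real.log_mul (by norm_num) hn'.ne',
    Real.log_div hn'.ne' (Real.exp_ne_zero _), Real.log_exp]
  field_simp
  ring

lemma tendsto_log_Gamma_nat :
    Tendsto (fun n : ℕ => 1 / (n : ℝ) * Real.log (Real.Gamma n) - Real.log n)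
      atTop (nhds (-1)) := by
  have h := tendsto_log_factorial.sub tendsto_log_div
  rw [sub_zero] at h
  refine h.congr' ?_
  filter_upwards [eventually_gt_atTop 0] with n hn
  have hn' : (0 : ℝ) < n := by exact_mod_cast hn
  rw [← Real.Gamma_nat_eq_factorial, Real.Gamma_add_one hn'.ne',
    Real.log_mul hn'.ne' (Real.Gamma_pos_of_pos hn').ne']
  field_simp
  ring

/-- Stirling for half-integers. Legendre duplication gives
`Γ(n/2 + 1)² = n! 2⁻ⁿ √π · gammaRatio n`, and the last factor is of order `√n`. -/
lemma tendsto_log_Gamma_half :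
    Tendsto (fun n : ℕ => 1 / (n : ℝ) * Real.log (Real.Gamma ((n : ℝ) / 2 + 1))
      - 1 / 2 * Real.log n) atTop (nhds (1 / 2 * (-1 - Real.log 2))) := by
  have h0 := (tendsto_gammaRatio.log (by positivity)).mul
    (tendsto_one_div_atTop_nhds_zero_nat (𝕜 := ℝ))
  have h1 := tendsto_log_div.const_mul (1 / 2)
  have h2 := (tendsto_one_div_atTop_nhds_zero_nat (𝕜 := ℝ)).const_mul (Real.log (√π))
  have h := (((tendsto_log_factorial.sub_const (Real.log 2)).add h2).add (h0.add h1)).const_mul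
    (1 / 2)
  simp only [mul_zero, add_zero] at h
  refine h.congr' ?_
  filter_upwards [eventually_gt_atTop 0] with n hn
  have hn' : (0 : ℝ) < n := by exact_mod_cast hn
  have hG : 0 < Real.Gamma ((n : ℝ) / 2 + 1) := Real.Gamma_pos_of_pos (by positivity)
  have hH : 0 < Real.Gamma ((n : ℝ) / 2 + 1 / 2) := Real.Gamma_pos_of_pos (by positivity)
  have hd := Real.Gamma_mul_Gamma_add_half ((n : ℝ) / 2 + 1 / 2)
  rw [show (n : ℝ) / 2 + 1 / 2 + 1 / 2 = n / 2 + 1 by ring,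
    show 2 * ((n : ℝ) / 2 + 1 / 2) = n + 1 by ring, Real.Gamma_nat_eq_factorial,
    show 1 - ((n : ℝ) + 1) = -n by ring] at hd
  have hd' := congrArg Real.log hd
  rw [Real.log_mul hH.ne' hG.ne', Real.log_mul (by positivity) (by positivity),
    Real.log_mul (by positivity) (by positivity), Real.log_rpow (by norm_num)] at hd'
  rw [Real.log_div (gammaRatio_pos n).ne' (by positivity), gammaRatio,
    Real.log_div hG.ne' hH.ne', Real.log_sqrt hn'.le]
  have : Real.log (Real.Gamma ((n : ℝ) / 2 + 1 / 2)) = Real.log (n.factorial : ℝ)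
    + -n * Real.log 2 + Real.log (√π) - Real.log (Real.Gamma ((n : ℝ) / 2 + 1)) := by linarith
  rw [this]
  field_simp
  ring

lemma kappa_pos (n : ℕ) : 0 < kappa n :=
  div_pos (by positivity) (Real.Gamma_pos_of_pos (by positivity))

lemma tendsto_log_kappa :
    Tendsto (fun n : ℕ => 1 / (n : ℝ) * Real.log (kappa n) + 1 / 2 * Real.log n)
      atTop (nhds (1 / 2 * (Real.log π + 1 + Real.log 2))) := by
  have h := tendsto_log_Gamma_half.const_sub (1 / 2 * Real.log π)
  rw [show 1 / 2 * Real.log π - 1 / 2 * (-1 - Real.log 2)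
    = 1 / 2 * (Real.log π + 1 + Real.log 2) by ring] at h
  refine h.congr' ?_
  filter_upwards [eventually_gt_atTop 0] with n hn
  have hn' : (0 : ℝ) < n := by exact_mod_cast hn
  have hG : 0 < Real.Gamma ((n : ℝ) / 2 + 1) := Real.Gamma_pos_of_pos (by positivity)
  rw [kappa, Real.log_div (by positivity) hG.ne', Real.log_rpow Real.pi_pos]
  field_simp
  ring

lemma kappa_quot {n : ℕ} (hn : 0 < n) : kappa (n - 1) / kappa n = gammaRatio n / √π := by
  have hG : 0 < Real.Gamma ((n : ℝ) / 2 + 1) := Real.Gamma_pos_of_pos (by positivity)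
  have hH : 0 < Real.Gamma ((n : ℝ) / 2 + 1 / 2) := Real.Gamma_pos_of_pos (by positivity)
  have hp : π ^ ((n : ℝ) / 2) = π ^ (((n : ℝ) - 1) / 2) * √π := by
    rw [Real.sqrt_eq_rpow, ← Real.rpow_add Real.pi_pos]
    ring_nf
  rw [kappa, kappa, gammaRatio, Nat.cast_sub hn, Nat.cast_one, hp,
    show ((n : ℝ) - 1) / 2 + 1 = n / 2 + 1 / 2 by ring]
  have : 0 < √π := by positivity
  field_simp

/-! ### Bounds for the incomplete Gamma integrals -/

lemma integrableOn_gamma {p : ℝ} (hp : 0 < p) :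
    MeasureTheory.IntegrableOn (fun t : ℝ => t ^ (p - 1) * Real.exp (-t)) (Set.Ioi 0) := by
  simpa only [mul_comm] using Real.GammaIntegral_convergent hp

lemma gamma_integrand_nonneg (p : ℝ) {S : Set ℝ} (hS : MeasurableSet S) (h0 : S ⊆ Set.Ioi 0) :
    0 ≤ᵐ[MeasureTheory.volume.restrict S] fun t : ℝ => t ^ (p - 1) * Real.exp (-t) := by
  filter_upwards [MeasureTheory.ae_restrict_mem hS] with t ht
  have : 0 < t := h0 ht
  positivity

/-- A window of length one already carries enough mass of the Gamma integral for the
exponential rate. -/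
lemma le_setIntegral_gamma {p a : ℝ} (hp : 1 ≤ p) (ha : 0 ≤ a) {S : Set ℝ}
    (hS : MeasurableSet S) (h0 : S ⊆ Set.Ioi 0) (hw : Set.Ioc a (a + 1) ⊆ S) :
    a ^ (p - 1) * Real.exp (-(a + 1)) ≤ ∫ t in S, t ^ (p - 1) * Real.exp (-t) := by
  have hint := integrableOn_gamma (p := p) (by linarith)
  have h1 : ∫ _ in Set.Ioc a (a + 1), a ^ (p - 1) * Real.exp (-(a + 1)) ≤
      ∫ t in Set.Ioc a (a + 1), t ^ (p - 1) * Real.exp (-t) := by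
    refine MeasureTheory.setIntegral_mono_on (MeasureTheory.integrableOn_const (by simp))
      (hint.mono_set (hw.trans h0)) measurableSet_Ioc fun t ht => ?_
    have ht0 : 0 < t := ha.trans_lt ht.1
    gcongr
    · exact ht.1.le
    · exact ht.2
  have h2 : ∫ t in Set.Ioc a (a + 1), t ^ (p - 1) * Real.exp (-t) ≤
      ∫ t in S, t ^ (p - 1) * Real.exp (-t) :=
    MeasureTheory.setIntegral_mono_set (hint.mono_set h0) (gamma_integrand_nonneg p hS h0)
      hw.eventuallyLE
  refine le_trans (le_of_eq ?_) (h1.trans h2)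
  simp

lemma setIntegral_gamma_le_Gamma {p : ℝ} (hp : 0 < p) {S : Set ℝ} (h0 : S ⊆ Set.Ioi 0) :
    ∫ t in S, t ^ (p - 1) * Real.exp (-t) ≤ Real.Gamma p := by
  rw [Real.Gamma_eq_integral hp]
  simp only [mul_comm (Real.exp _)]
  exact MeasureTheory.setIntegral_mono_set (integrableOn_gamma hp)
    (gamma_integrand_nonneg p measurableSet_Ioi subset_rfl) h0.eventuallyLE

/-- The tangent-line (Chernoff) bound `t ≤ x exp(t/x - 1)` applied to the Gamma integrand. -/
lemma gamma_integrand_le {p x t : ℝ} (hp : 1 ≤ p) (hx : 0 < x) (ht : 0 < t) :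
    t ^ (p - 1) * Real.exp (-t) ≤
      x ^ (p - 1) * Real.exp (-(p - 1)) * Real.exp (((p - 1) / x - 1) * t) := by
  have h1 : t ≤ x * Real.exp (t / x - 1) := by
    have := Real.add_one_le_exp (t / x - 1)
    rw [sub_add_cancel, div_le_iff₀ hx] at this
    linarith
  have h2 : t ^ (p - 1) ≤ x ^ (p - 1) * Real.exp ((t / x - 1) * (p - 1)) := by
    rw [Real.exp_mul, ← Real.mul_rpow hx.le (Real.exp_pos _).le]
    exact Real.rpow_le_rpow ht.le h1 (by linarith)
  calc _ ≤ x ^ (p - 1) * Real.exp ((t / x - 1) * (p - 1)) * Real.exp (-t) := by gcongr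
    _ = _ := by
      rw [mul_assoc, mul_assoc, ← Real.exp_add, ← Real.exp_add]
      congr 2
      field_simp
      ring

lemma setIntegral_far_le {p x : ℝ} (hp : 1 ≤ p) (hx : p ≤ x) :
    ∫ t in Set.Ioi x, t ^ (p - 1) * Real.exp (-t) ≤ x ^ p * Real.exp (-x) := by
  have hx0 : 0 < x := by linarith
  have hb : (p - 1) / x - 1 < 0 := by
    rw [sub_neg, div_lt_one hx0]
    linarith
  calc _ ≤ ∫ t in Set.Ioi x,
        x ^ (p - 1) * Real.exp (-(p - 1)) * Real.exp (((p - 1) / x - 1) * t) := by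
        refine MeasureTheory.setIntegral_mono_on
          ((integrableOn_gamma (by linarith)).mono_set (Set.Ioi_subset_Ioi hx0.le))
          ((integrableOn_exp_mul_Ioi hb x).const_mul _) measurableSet_Ioi fun t ht => ?_
        exact gamma_integrand_le hp hx0 (hx0.trans ht)
    _ = x ^ p * Real.exp (-x) / (x - (p - 1)) := by
        rw [MeasureTheory.integral_const_mul, integral_exp_mul_Ioi hb,
          show ((p - 1) / x - 1) * x = (p - 1) + -x by field_simp; ring, Real.exp_add,
          Real.exp_neg (p - 1), Real.rpow_sub_one hx0.ne',
          show (p - 1) / x - 1 = -((x - (p - 1)) / x) by field_simp; ring]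
        have : 0 < x - (p - 1) := by linarith
        field_simp
    _ ≤ _ := div_le_self (by positivity) (by linarith)

lemma setIntegral_near_le {p x : ℝ} (hx0 : 0 < x) (hx : x ≤ p - 1) :
    ∫ t in Set.Ioc 0 x, t ^ (p - 1) * Real.exp (-t) ≤ x ^ p * Real.exp (-x) := by
  calc _ ≤ ∫ _ in Set.Ioc 0 x, x ^ (p - 1) * Real.exp (-x) := by
        refine MeasureTheory.setIntegral_mono_on
          ((integrableOn_gamma (by linarith)).mono_set Set.Ioc_subset_Ioi_self)
          (MeasureTheory.integrableOn_const (by simp)) measurableSet_Ioc fun t ht => ?_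
        refine (gamma_integrand_le (by linarith) hx0 ht.1).trans ?_
        rw [mul_assoc, ← Real.exp_add]
        gcongr
        have h1 : (p - 1) / x - 1 = (p - 1 - x) / x := by field_simp
        have h2 : (p - 1 - x) / x * t ≤ (p - 1 - x) / x * x := by
          have : 0 ≤ (p - 1 - x) / x := div_nonneg (by linarith) hx0.le
          gcongr
          exact ht.2
        rw [div_mul_cancel₀ _ hx0.ne'] at h2
        rw [h1]
        linarith
    _ = _ := by
        simp [hx0.le, Real.rpow_sub_one hx0.ne']
        field_simp

/-! ### Exponential rates -/

/-- Rate of the lower bound `le_setIntegral_gamma`. -/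
lemma tendsto_rate_window {a : ℕ → ℝ} {u : ℝ} (hu : 0 < u)
    (ha : Tendsto (fun n : ℕ => a n / n) atTop (nhds u)) :
    Tendsto (fun n : ℕ => 1 / (n : ℝ) * Real.log (a n ^ ((n : ℝ) - 1) * Real.exp (-(a n + 1)))
      - Real.log n) atTop (nhds (Real.log u - u)) := by
  have h0 := tendsto_one_div_atTop_nhds_zero_nat (𝕜 := ℝ)
  have hl := ha.log hu.ne'
  have h := ((((h0.const_sub 1).mul hl).sub tendsto_log_div).sub ha).sub h0
  simp only [sub_zero, one_mul] at h
  refine h.congr' ?_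
  filter_upwards [eventually_gt_atTop 0, ha.eventually (lt_mem_nhds hu)] with n hn han
  have hn' : (0 : ℝ) < n := by exact_mod_cast hn
  have ha0 : 0 < a n := by simpa [hn'] using (div_pos_iff_of_pos_right hn').1 han
  rw [Real.log_div ha0.ne' hn'.ne', Real.log_mul (by positivity) (by positivity),
    Real.log_exp, Real.log_rpow ha0]
  field_simp
  ring

/-- Rate of the upper bounds `setIntegral_far_le` and `setIntegral_near_le`. -/
lemma tendsto_rate_endpoint {a : ℕ → ℝ} {u : ℝ} (hu : 0 < u)
    (ha : Tendsto (fun n : ℕ => a n / n) atTop (nhds u)) :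
    Tendsto (fun n : ℕ => 1 / (n : ℝ) * Real.log (a n ^ (n : ℝ) * Real.exp (-a n))
      - Real.log n) atTop (nhds (Real.log u - u)) := by
  refine ((ha.log hu.ne').sub ha).congr' ?_
  filter_upwards [eventually_gt_atTop 0, ha.eventually (lt_mem_nhds hu)] with n hn han
  have hn' : (0 : ℝ) < n := by exact_mod_cast hn
  have ha0 : 0 < a n := by simpa [hn'] using (div_pos_iff_of_pos_right hn').1 han
  rw [Real.log_div ha0.ne' hn'.ne', Real.log_mul (by positivity) (by positivity),
    Real.log_exp, Real.log_rpow ha0]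
  field_simp
  ring

lemma tendsto_rate_squeeze {l J r : ℕ → ℝ} {v : ℝ}
    (hl : Tendsto (fun n : ℕ => 1 / (n : ℝ) * Real.log (l n) - Real.log n) atTop (nhds v))
    (hr : Tendsto (fun n : ℕ => 1 / (n : ℝ) * Real.log (r n) - Real.log n) atTop (nhds v))
    (h : ∀ᶠ n in atTop, 0 < l n ∧ l n ≤ J n ∧ J n ≤ r n) :
    (∀ᶠ n in atTop, 0 < J n) ∧
    Tendsto (fun n : ℕ => 1 / (n : ℝ) * Real.log (J n) - Real.log n) atTop (nhds v) := by
  refine ⟨h.mono fun n hn => hn.1.trans_le hn.2.1,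
    tendsto_of_tendsto_of_tendsto_of_le_of_le' hl hr ?_ ?_⟩
  · filter_upwards [h] with n hn
    have := Real.log_le_log hn.1 hn.2.1
    gcongr
  · filter_upwards [h] with n hn
    have := Real.log_le_log (hn.1.trans_le hn.2.1) hn.2.2
    gcongr

/-- Exponential rates of the incomplete Gamma integrals cut off at `x n ~ s n`: each equals
the supremum of `log u - u` over the admissible `u`, attained at `u = s` or at `u = 1`. -/
lemma tendsto_rate_incomplete {x : ℕ → ℝ} {s : ℝ} (hs : 0 < s)
    (hx : Tendsto (fun n : ℕ => x n / n) atTop (nhds s)) :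
    let U : ℕ → ℝ := fun n => ∫ t in Set.Ioi (x n), t ^ ((n : ℝ) - 1) * Real.exp (-t)
    let L : ℕ → ℝ := fun n => ∫ t in Set.Ioc 0 (x n), t ^ ((n : ℝ) - 1) * Real.exp (-t)
    let rate : (ℕ → ℝ) → ℝ → Prop := fun J v => (∀ᶠ n in atTop, 0 < J n) ∧
      Tendsto (fun n : ℕ => 1 / (n : ℝ) * Real.log (J n) - Real.log n) atTop (nhds v)
    (1 < s → rate U (Real.log s - s)) ∧ (s < 1 → rate U (-1)) ∧
    (s < 1 → rate L (Real.log s - s)) ∧ (1 < s → rate L (-1)) := by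
  intro U L rate
  have h0 := tendsto_one_div_atTop_nhds_zero_nat (𝕜 := ℝ)
  have hxpos : ∀ᶠ n : ℕ in atTop, 0 < x n := by
    filter_upwards [eventually_gt_atTop 0, hx.eventually (lt_mem_nhds hs)] with n hn h
    exact (div_pos_iff_of_pos_right (by exact_mod_cast hn)).1 h
  have hxm : Tendsto (fun n : ℕ => (x n - 1) / n) atTop (nhds s) := by
    have := hx.sub h0
    simp only [sub_zero] at this
    exact this.congr fun n => by ring
  have hself : Tendsto (fun n : ℕ => (n : ℝ) / n) atTop (nhds 1) := by
    refine tendsto_const_nhds.congr' ?_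
    filter_upwards [eventually_gt_atTop 0] with n hn
    rw [div_self (by positivity)]
  have hpred : Tendsto (fun n : ℕ => ((n : ℝ) - 1) / n) atTop (nhds 1) := by
    have := hself.sub h0
    simp only [sub_zero] at this
    exact this.congr fun n => by ring
  refine ⟨fun h1 => ?_, fun h1 => ?_, fun h1 => ?_, fun h1 => ?_⟩
  · refine tendsto_rate_squeeze (tendsto_rate_window hs hx) (tendsto_rate_endpoint hs hx) ?_
    filter_upwards [eventually_gt_atTop 0, hxpos, hx.eventually (lt_mem_nhds h1)] with n hn hp hlt
    have hn1 : (1 : ℝ) ≤ n := by exact_mod_cast hn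
    rw [one_lt_div (by linarith)] at hlt
    exact ⟨by positivity, le_setIntegral_gamma hn1 hp.le measurableSet_Ioi
      (Set.Ioi_subset_Ioi hp.le) Set.Ioc_subset_Ioi_self, setIntegral_far_le hn1 hlt.le⟩
  · have hw := tendsto_rate_window one_pos hself
    rw [Real.log_one, zero_sub] at hw
    refine tendsto_rate_squeeze hw tendsto_log_Gamma_nat ?_
    filter_upwards [eventually_gt_atTop 0, hxpos, hx.eventually (gt_mem_nhds h1)] with n hn hp hlt
    have hn1 : (1 : ℝ) ≤ n := by exact_mod_cast hn
    rw [div_lt_one (by linarith)] at hlt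
    exact ⟨by positivity, le_setIntegral_gamma hn1 (by linarith) measurableSet_Ioi
      (Set.Ioi_subset_Ioi hp.le) fun t ht => hlt.trans ht.1,
      setIntegral_gamma_le_Gamma (by linarith) (Set.Ioi_subset_Ioi hp.le)⟩
  · refine tendsto_rate_squeeze (tendsto_rate_window hs hxm) (tendsto_rate_endpoint hs hx) ?_
    -- `x n ≤ n - 1` and `1 < x n` hold eventually because `x n / n` tends to `s ∈ (0, 1)`.
    filter_upwards [eventually_gt_atTop 0, hxm.eventually (lt_mem_nhds hs),
      (hx.add h0).eventually (gt_mem_nhds (by simpa using h1))] with n hn hp hlt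
    have hn1 : (1 : ℝ) ≤ n := by exact_mod_cast hn
    have hp' : 0 < x n - 1 := (div_pos_iff_of_pos_right (by linarith)).1 hp
    rw [← add_div, div_lt_one (by linarith)] at hlt
    exact ⟨by positivity, le_setIntegral_gamma hn1 hp'.le measurableSet_Ioc
      Set.Ioc_subset_Ioi_self (Set.Ioc_subset_Ioc hp'.le (by linarith)),
      setIntegral_near_le (by linarith) (by linarith)⟩
  · have hw := tendsto_rate_window one_pos hpred
    rw [Real.log_one, zero_sub] at hw
    refine tendsto_rate_squeeze hw tendsto_log_Gamma_nat ?_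
    filter_upwards [eventually_gt_atTop 1, hx.eventually (lt_mem_nhds h1)] with n hn hlt
    have hn1 : (1 : ℝ) < n := by exact_mod_cast hn
    have hn2 : (0 : ℝ) < n - 1 := by linarith
    rw [one_lt_div (by linarith)] at hlt
    exact ⟨by positivity, le_setIntegral_gamma hn1.le hn2.le measurableSet_Ioc
      Set.Ioc_subset_Ioi_self (Set.Ioc_subset_Ioc hn2.le (by linarith)),
      setIntegral_gamma_le_Gamma (by linarith) Set.Ioc_subset_Ioi_self⟩

/-- Exponential rates for the expected number of Poisson data points in the zero cell at
distance more than (resp. at most) `n^{3/2-α} R` from the origin. -/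
theorem expected_points_far_near_asymptotics (ρ lam α R : ℝ) (hρ : 0 < ρ) (hR : 0 < R)
    (γ : ℕ → ℝ) (hγpos : ∀ n, 0 < γ n)
    (hγ : Tendsto (fun n : ℕ => γ n / (n : ℝ) ^ α) atTop (nhds ρ))
    (lamSeq c E : ℕ → ℝ)
    (hlam : ∀ n : ℕ, lamSeq n = (n : ℝ) ^ ((n : ℝ) * (α - 1)) * Real.exp ((n : ℝ) * lam))
    (hc : ∀ n : ℕ, c n = 2 * γ n * kappa (n - 1) / ((n : ℝ) * kappa n))
    (hE : ∀ n : ℕ, E n =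
      lamSeq n * Real.Gamma ((n : ℝ) + 1) * kappa n * c n ^ (-(n : ℝ))) :
    (Real.sqrt 2 * ρ * R / Real.sqrt Real.pi > 1 →
      Tendsto (fun n : ℕ =>
          (1 / (n : ℝ)) * Real.log (E n * gammaU n (c n * (n : ℝ) ^ ((3 : ℝ) / 2 - α) * R)))
        atTop
        (nhds (lam + Real.log (Real.sqrt (2 * Real.pi * Real.exp 1) * R)
          - Real.sqrt 2 * ρ * R / Real.sqrt Real.pi))) ∧
    (Real.sqrt 2 * ρ * R / Real.sqrt Real.pi < 1 →
      Tendsto (fun n : ℕ =>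
          (1 / (n : ℝ)) * Real.log (E n * gammaU n (c n * (n : ℝ) ^ ((3 : ℝ) / 2 - α) * R)))
        atTop
        (nhds (lam + Real.log (Real.pi / (ρ * Real.sqrt (Real.exp 1)))))) ∧
    (Real.sqrt 2 * ρ * R / Real.sqrt Real.pi < 1 →
      Tendsto (fun n : ℕ =>
          (1 / (n : ℝ)) * Real.log (E n * gammaL n (c n * (n : ℝ) ^ ((3 : ℝ) / 2 - α) * R)))
        atTop
        (nhds (lam + Real.log (Real.sqrt (2 * Real.pi * Real.exp 1) * R)
          - Real.sqrt 2 * ρ * R / Real.sqrt Real.pi))) ∧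
    (Real.sqrt 2 * ρ * R / Real.sqrt Real.pi > 1 →
      Tendsto (fun n : ℕ =>
          (1 / (n : ℝ)) * Real.log (E n * gammaL n (c n * (n : ℝ) ^ ((3 : ℝ) / 2 - α) * R)))
        atTop
        (nhds (lam + Real.log (Real.pi / (ρ * Real.sqrt (Real.exp 1)))))) := by
  set s : ℝ := √2 * ρ * R / √π with hs_def
  have hs : 0 < s := by positivity
  have hcpos : ∀ n : ℕ, 0 < n → 0 < c n := fun n hn => by
    have := kappa_pos n
    have := kappa_pos (n - 1)
    have := hγpos n
    rw [hc]
    positivity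
  -- the cut-off is asymptotically `s * n`
  have hx : Tendsto (fun n : ℕ => c n * (n : ℝ) ^ ((3 : ℝ) / 2 - α) * R / n) atTop (nhds s) := by
    have h := ((hγ.mul tendsto_gammaRatio).const_mul (2 / √π)).mul_const R
    have hlim : 2 / √π * (ρ * √(1 / 2)) * R = s := by
      rw [hs_def, Real.sqrt_div (by norm_num), Real.sqrt_one]
      have h2 : √2 * √2 = 2 := Real.mul_self_sqrt (by norm_num)
      field_simp
      linarith
    rw [hlim] at h
    refine h.congr' ?_
    filter_upwards [eventually_gt_atTop 0] with n hn
    have hn' : (0 : ℝ) < n := by exact_mod_cast hn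
    have hp : (n : ℝ) ^ ((3 : ℝ) / 2 - α) = n * n / ((n : ℝ) ^ α * √(n : ℝ)) := by
      rw [Real.rpow_sub hn', show (3 : ℝ) / 2 = 2 - 1 / 2 by norm_num, Real.rpow_sub hn',
        ← Real.sqrt_eq_rpow, Real.rpow_two]
      field_simp
    have hc' : c n = 2 * γ n / n * (gammaRatio n / √π) := by
      rw [hc, ← kappa_quot hn]
      have := kappa_pos n
      field_simp
    rw [hp, hc']
    field_simp
  -- the prefactor multiplying the unnormalized incomplete Gamma integral
  have hpre : Tendsto (fun n : ℕ => 1 / (n : ℝ) * Real.log (E n / Real.Gamma n) + Real.log n)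
      atTop (nhds (lam + Real.log (√(2 * π * Real.exp 1) * R) - Real.log s)) := by
    have h := ((tendsto_log_kappa.add tendsto_log_div).sub (hx.log hs.ne')).add_const
      (lam + Real.log R)
    have hlim : 1 / 2 * (Real.log π + 1 + Real.log 2) + 0 - Real.log s + (lam + Real.log R)
        = lam + Real.log (√(2 * π * Real.exp 1) * R) - Real.log s := by
      rw [Real.log_mul (by positivity) hR.ne', Real.log_sqrt (by positivity),
        Real.log_mul (by positivity) (by positivity), Real.log_mul (by norm_num) (by positivity),
        Real.log_exp]
      ring
    rw [hlim] at h
    refine h.congr' ?_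
    filter_upwards [eventually_gt_atTop 0] with n hn
    have hn' : (0 : ℝ) < n := by exact_mod_cast hn
    have hk := kappa_pos n
    have hcn := hcpos n hn
    have hG : 0 < Real.Gamma n := Real.Gamma_pos_of_pos hn'
    have hEn : E n / Real.Gamma n = (n : ℝ) ^ ((n : ℝ) * (α - 1)) * Real.exp ((n : ℝ) * lam)
        * n * kappa n * c n ^ (-(n : ℝ)) := by
      rw [hE, hlam, Real.Gamma_add_one hn'.ne']
      field_simp
    rw [hEn, Real.log_mul (by positivity) (by positivity),
      Real.log_mul (by positivity) (by positivity), Real.log_mul (by positivity) (by positivity),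
      Real.log_mul (by positivity) (by positivity), Real.log_rpow hn', Real.log_exp,
      Real.log_rpow hcn, Real.log_div (by positivity) hn'.ne',
      Real.log_mul (by positivity) hR.ne', Real.log_mul (by positivity) (by positivity),
      Real.log_rpow hn']
    field_simp
    ring
  have hEpos : ∀ n : ℕ, 0 < n → 0 < E n / Real.Gamma n := fun n hn => by
    have hn' : (0 : ℝ) < n := by exact_mod_cast hn
    have hk := kappa_pos n
    have hcn := hcpos n hn
    have hG : 0 < Real.Gamma n := Real.Gamma_pos_of_pos hn'
    have hG' : 0 < Real.Gamma ((n : ℝ) + 1) := Real.Gamma_pos_of_pos (by positivity)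
    rw [hE, hlam]
    positivity
  have key : ∀ (J : ℕ → ℝ) (v : ℝ), ((∀ᶠ n in atTop, 0 < J n) ∧
      Tendsto (fun n : ℕ => 1 / (n : ℝ) * Real.log (J n) - Real.log n) atTop (nhds v)) →
      Tendsto (fun n : ℕ => 1 / (n : ℝ) * Real.log (E n * (J n / Real.Gamma n))) atTop
        (nhds (lam + Real.log (√(2 * π * Real.exp 1) * R) - Real.log s + v)) := by
    rintro J v ⟨hJ, hv⟩
    refine (hpre.add hv).congr' ?_
    filter_upwards [eventually_gt_atTop 0, hJ] with n hn hJn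
    rw [show E n * (J n / Real.Gamma n) = E n / Real.Gamma n * J n by ring,
      Real.log_mul (hEpos n hn).ne' hJn.ne']
    ring
  have e1 : lam + Real.log (√(2 * π * Real.exp 1) * R) - Real.log s + (Real.log s - s)
      = lam + Real.log (√(2 * π * Real.exp 1) * R) - s := by ring
  have e2 : lam + Real.log (√(2 * π * Real.exp 1) * R) - Real.log s + -1
      = lam + Real.log (π / (ρ * √(Real.exp 1))) := by
    rw [hs_def, Real.log_div (by positivity) (by positivity),
      Real.log_div (by positivity) (by positivity), Real.log_mul (by positivity) hR.ne',
      Real.log_mul (by positivity) hR.ne', Real.log_mul (by positivity) hρ.ne',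
      Real.log_mul hρ.ne' (by positivity), Real.log_sqrt (by positivity),
      Real.log_sqrt (by positivity), Real.log_sqrt (by positivity), Real.log_sqrt (by positivity),
      Real.log_mul (by positivity) (by positivity), Real.log_mul (by norm_num) (by positivity),
      Real.log_exp]
    ring
  obtain ⟨k1, k2, k3, k4⟩ := tendsto_rate_incomplete hs hx
  refine ⟨fun h => ?_, fun h => ?_, fun h => ?_, fun h => ?_⟩
  · exact e1 ▸ key _ _ (k1 h)
  · exact e2 ▸ key _ _ (k2 h)
  · exact e1 ▸ key _ _ (k3 h)
  · exact e2 ▸ key _ _ (k4 h)
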